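/- arXiv:math/0112309 — 4 statements merged into one kernel-verified Lean document; each statement's English description precedes it below -/
import Mathlib

section
/- The star product of two elements of S^c again satisfies the twisted periodicity condition: if Φ, Ψ ∈ S^c then (Φ ⋆ Ψ)(x + k, y, p) = e(ckpy)·(Φ ⋆ Ψ)(x, y, p) for all k ∈ ℤ, x ∈ ℝ, y ∈ ℝ, p ∈ ℤ. -/
/-!
The identity holds term by term in the sum over `q`. Translating `x` by `k` multiplies the factor
of `Φ` by `e(ckq(y - ℏ(q-p)ν))` and the factor of `Ψ` by `e(ck(p-q)(y - ℏqν))`. The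
`ν`-contributions `q(q-p)` and `(p-q)q` cancel, so the product of the two phases is `e(ckpy)`,
which does not depend on `q` and comes out of the sum.
-/

open MeasureTheory ENNReal

noncomputable section

/-- Membership in the space `S^c` of Rieffel's quantum Heisenberg manifold. -/
structure InSc (c : ℕ) (Φ : ℝ → ℝ → ℤ → ℂ) : Prop where
  smooth : ∀ p : ℤ, ContDiff ℝ (⊤ : ℕ∞) (fun xy : ℝ × ℝ => Φ xy.1 xy.2 p)
  periodic_y : ∀ (x y : ℝ) (p : ℤ), Φ x (y + 1) p = Φ x y p
  twisted : ∀ (k : ℤ) (x y : ℝ) (p : ℤ),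
    Φ (x + k) y p = Complex.exp (2 * Real.pi * Complex.I * ((c : ℂ) * (k : ℂ) * (p : ℂ) * (y : ℂ))) * Φ x y p
  poly_bounded : ∀ (P : Polynomial ℤ) (m n : ℕ) (K : Set (ℝ × ℝ)), IsCompact K →
    ∃ C : ℝ, ∀ (x y : ℝ) (p : ℤ), (x, y) ∈ K →
      |((P.eval p : ℤ) : ℝ)| * ‖iteratedDeriv m (fun x' => iteratedDeriv n (fun y' => Φ x' y' p) y) x‖ ≤ C

/-- The star product on `S^c`. -/
def starProd (hbar μ ν : ℝ) (Φ Ψ : ℝ → ℝ → ℤ → ℂ) : ℝ → ℝ → ℤ → ℂ :=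
  fun x y p => ∑' q : ℤ,
    Φ (x - hbar * ((q - p : ℤ) : ℝ) * μ) (y - hbar * ((q - p : ℤ) : ℝ) * ν) q *
    Ψ (x - hbar * (q : ℝ) * μ) (y - hbar * (q : ℝ) * ν) (p - q)

/-- The involution on `S^c`. -/
def invol (Φ : ℝ → ℝ → ℤ → ℂ) : ℝ → ℝ → ℤ → ℂ :=
  fun x y p => (starRingEnd ℂ) (Φ x y (-p))

/-- The norm `‖·‖_{∞,∞,1}`, valued in `ℝ≥0∞`. -/
def norm1 (Φ : ℝ → ℝ → ℤ → ℂ) : ℝ≥0∞ :=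
  ∑' p : ℤ, ⨆ x : ℝ, ⨆ y : ℝ, (‖Φ x y p‖₊ : ℝ≥0∞)

/-- The representation `π` acting on functions on `ℝ × [0,1) × ℤ`. -/
def piRep (hbar μ ν : ℝ) (Φ ξ : ℝ → ℝ → ℤ → ℂ) : ℝ → ℝ → ℤ → ℂ :=
  fun x y p => ∑' q : ℤ,
    Φ (x - hbar * ((q - 2 * p : ℤ) : ℝ) * μ) (y - hbar * ((q - 2 * p : ℤ) : ℝ) * ν) q *
    ξ x y (p - q)

/-- Square integrability (with measurability) on `ℝ × [0,1) × ℤ`. -/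
def SqInt (ξ : ℝ → ℝ → ℤ → ℂ) : Prop :=
  (∀ p : ℤ, Measurable (fun xy : ℝ × ℝ => ξ xy.1 xy.2 p)) ∧
  (∫⁻ x : ℝ, ∫⁻ y in Set.Ico (0:ℝ) 1, ∑' p : ℤ, ((‖ξ x y p‖₊ : ℝ≥0∞)) ^ 2) < ⊤

/-- The `L²` norm on `ℝ × [0,1) × ℤ`, valued in `ℝ≥0∞`. -/
def l2norm (ξ : ℝ → ℝ → ℤ → ℂ) : ℝ≥0∞ :=
  (∫⁻ x : ℝ, ∫⁻ y in Set.Ico (0:ℝ) 1, ∑' p : ℤ, ((‖ξ x y p‖₊ : ℝ≥0∞)) ^ 2) ^ (1/2 : ℝ)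

/-- The inner product on `L²(ℝ × [0,1) × ℤ)`. -/
def ip (ξ η : ℝ → ℝ → ℤ → ℂ) : ℂ :=
  ∫ x : ℝ, ∫ y in Set.Ico (0:ℝ) 1, ∑' p : ℤ, ξ x y p * (starRingEnd ℂ) (η x y p)

/-- The action of the Heisenberg group. -/
def Lact (c : ℕ) (r s t : ℝ) (Φ : ℝ → ℝ → ℤ → ℂ) : ℝ → ℝ → ℤ → ℂ :=
  fun x y p => Complex.exp (2 * Real.pi * Complex.I *
    ((p : ℂ) * ((t : ℂ) + (c : ℂ) * (s : ℂ) * ((x : ℂ) - (r : ℂ))))) * Φ (x - r) (y - s) p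

/-- The trace `τ`. -/
def tr (Φ : ℝ → ℝ → ℤ → ℂ) : ℂ :=
  ∫ x in (0:ℝ)..1, ∫ y in (0:ℝ)..1, Φ x y 0

/-- The zero mode `Φ⁽⁰⁾`. -/
def zeroMode (Φ : ℝ → ℝ → ℤ → ℂ) : ℝ → ℝ → ℤ → ℂ :=
  fun x y p => if p = 0 then Φ x y 0 else 0

/-- The derivation `δ₁`. -/
def d1 (Φ : ℝ → ℝ → ℤ → ℂ) : ℝ → ℝ → ℤ → ℂ :=
  fun x y p => -(deriv (fun x' => Φ x' y p) x)

/-- The derivation `δ₂`. -/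
def d2 (c : ℕ) (Φ : ℝ → ℝ → ℤ → ℂ) : ℝ → ℝ → ℤ → ℂ :=
  fun x y p => 2 * Real.pi * Complex.I * (c : ℂ) * (p : ℂ) * (x : ℂ) * Φ x y p
    - deriv (fun y' => Φ x y' p) y

/-- The derivation `δ₃`. -/
def d3 (Φ : ℝ → ℝ → ℤ → ℂ) : ℝ → ℝ → ℤ → ℂ :=
  fun x y p => 2 * Real.pi * Complex.I * (p : ℂ) * Φ x y p

/-- The phase `e(ckpy)` that the `p`-th component of an element of `S^c` acquires under translation
of `x` by `k`. -/
def twistPhase (c : ℂ) (k p : ℤ) (y : ℝ) : ℂ :=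
  Complex.exp (2 * Real.pi * Complex.I * (c * (k : ℂ) * (p : ℂ) * (y : ℂ)))

/-- The twisted periodicity condition of `S^c`, separated from smoothness, periodicity in `y` and
decay in `p`. -/
def IsTwistedPeriodic (c : ℂ) (Φ : ℝ → ℝ → ℤ → ℂ) : Prop :=
  ∀ (k : ℤ) (x y : ℝ) (p : ℤ), Φ (x + k) y p = twistPhase c k p y * Φ x y p

lemma twistPhase_mul_twistPhase_sub (c : ℂ) (hbar ν : ℝ) (k p q : ℤ) (y : ℝ) :
    twistPhase c k q (y - hbar * ((q - p : ℤ) : ℝ) * ν) *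
      twistPhase c k (p - q) (y - hbar * (q : ℝ) * ν) = twistPhase c k p y := by
  simp only [twistPhase, ← Complex.exp_add]
  congr 1
  push_cast
  ring

lemma IsTwistedPeriodic.apply_add_int_sub {c : ℂ} {Φ : ℝ → ℝ → ℤ → ℂ} (hΦ : IsTwistedPeriodic c Φ)
    (k : ℤ) (x a y : ℝ) (p : ℤ) : Φ (x + k - a) y p = twistPhase c k p y * Φ (x - a) y p := by
  rw [add_sub_right_comm, hΦ]

theorem starProd_twisted_periodicity_general (c : ℂ) (hbar μ ν : ℝ) (Φ Ψ : ℝ → ℝ → ℤ → ℂ)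
    (hΦ : IsTwistedPeriodic c Φ) (hΨ : IsTwistedPeriodic c Ψ) :
    IsTwistedPeriodic c (starProd hbar μ ν Φ Ψ) := by
  intro k x y p
  simp only [starProd]
  -- The two sums converge or diverge together; if they diverge, `∑'` makes both sides `0`.
  rw [← tsum_mul_left]
  refine tsum_congr fun q => ?_
  rw [hΦ.apply_add_int_sub, hΨ.apply_add_int_sub, mul_mul_mul_comm, twistPhase_mul_twistPhase_sub]

theorem starProd_twisted_periodicity (c : ℕ) (hc : 0 < c) (hbar μ ν : ℝ) (hμν : μ ^ 2 + ν ^ 2 ≠ 0)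
    (Φ Ψ : ℝ → ℝ → ℤ → ℂ) (hΦ : InSc c Φ) (hΨ : InSc c Ψ) :
    ∀ (k : ℤ) (x y : ℝ) (p : ℤ),
      starProd hbar μ ν Φ Ψ (x + k) y p =
        Complex.exp (2 * Real.pi * Complex.I * ((c : ℂ) * (k : ℂ) * (p : ℂ) * (y : ℂ))) *
          starProd hbar μ ν Φ Ψ x y p :=
  starProd_twisted_periodicity_general c hbar μ ν Φ Ψ hΦ.twisted hΨ.twisted

end
end

section
/- The star product on S^c is associative: for all Φ, Ψ, Θ ∈ S^c, ((Φ ⋆ Ψ) ⋆ Θ)(x, y, p) = (Φ ⋆ (Ψ ⋆ Θ))(x, y, p) for all x ∈ ℝ, y ∈ ℝ, p ∈ ℤ. -/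
/-!
Both triple products are iterated sums over `ℤ × ℤ` of the same family: with `q` the outer index
on the left and `r` the outer index on the right, replacing the inner index on the right by `q - r`
turns both summands into
`Φ(x - ℏ(r-p)μ, ·, r) Ψ(x - ℏ(q+r-p)μ, ·, q-r) Θ(x - ℏqμ, ·, p-q)`.
It remains to exchange the two sums, for which it suffices that `Ψ` is bounded and that `Φ` and `Θ`
have finite `‖·‖_{∞,∞,1}` norm. On `S^c` this holds because twisted periodicity in `x` and
periodicity in `y` make `|Φ|` invariant under integer translations, so that the decay in `p` on the
compact unit square is uniform on the whole plane.
-/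

open MeasureTheory ENNReal

noncomputable section

lemma norm1_ne_top_iff {Φ : ℝ → ℝ → ℤ → ℂ} :
    norm1 Φ ≠ ⊤ ↔ ∃ u : ℤ → ℝ, Summable u ∧ ∀ x y p, ‖Φ x y p‖ ≤ u p := by
  constructor
  · intro h
    refine ⟨_, ENNReal.summable_toReal h, fun x y p => ?_⟩
    have norm_le_iSup : (‖Φ x y p‖₊ : ℝ≥0∞) ≤ ⨆ x, ⨆ y, (‖Φ x y p‖₊ : ℝ≥0∞) :=
      le_iSup₂ (f := fun x y => (‖Φ x y p‖₊ : ℝ≥0∞)) x y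
    simpa using ENNReal.toReal_mono (ENNReal.ne_top_of_tsum_ne_top h p) norm_le_iSup
  · rintro ⟨u, hu, hΦ⟩
    refine ne_top_of_le_ne_top hu.tsum_ofReal_ne_top (ENNReal.tsum_le_tsum fun p => ?_)
    refine iSup₂_le fun x y => ?_
    rw [← enorm_eq_nnnorm, ← ofReal_norm]
    exact ENNReal.ofReal_le_ofReal (hΦ x y p)

lemma summable_inv_one_add_intCast_sq : Summable fun p : ℤ => (1 + (p : ℝ) ^ 2)⁻¹ := by
  have summable_inv_sq : Summable fun p : ℤ => ((p : ℝ) ^ 2)⁻¹ := by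
    simpa only [one_div] using Real.summable_one_div_int_pow.mpr one_lt_two
  -- The comparison with `(p ^ 2)⁻¹` fails only at `p = 0`, where `0⁻¹ = 0`.
  refine summable_inv_sq.of_norm_bounded_eventually ?_
  filter_upwards [(Set.finite_singleton (0 : ℤ)).compl_mem_cofinite] with p hp
  have p_ne_zero : (p : ℝ) ≠ 0 := by exact_mod_cast hp
  rw [Real.norm_of_nonneg (by positivity)]
  gcongr
  exact le_add_of_nonneg_left zero_le_one

namespace InSc

variable {c : ℕ} {Φ : ℝ → ℝ → ℤ → ℂ}

lemma periodic_norm_left (h : InSc c Φ) (y : ℝ) (p : ℤ) :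
    Function.Periodic (fun x => ‖Φ x y p‖) 1 := by
  intro x
  have phase_eq : 2 * Real.pi * Complex.I * ((c : ℂ) * ((1 : ℤ) : ℂ) * (p : ℂ) * (y : ℂ)) =
      ((2 * Real.pi * (c * p * y) : ℝ) : ℂ) * Complex.I := by
    push_cast
    ring
  have twisted_one := h.twisted 1 x y p
  rw [phase_eq, Int.cast_one] at twisted_one
  simp only [twisted_one, norm_mul, Complex.norm_exp_ofReal_mul_I, one_mul]

lemma periodic_norm_right (h : InSc c Φ) (x : ℝ) (p : ℤ) :
    Function.Periodic (fun y => ‖Φ x y p‖) 1 :=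
  fun y => congrArg norm (h.periodic_y x y p)

lemma exists_norm_eq_mem_unitSquare (h : InSc c Φ) (x y : ℝ) (p : ℤ) :
    ∃ z ∈ Set.Icc (0 : ℝ) 1 ×ˢ Set.Icc (0 : ℝ) 1, ‖Φ x y p‖ = ‖Φ z.1 z.2 p‖ := by
  obtain ⟨x', hx', norm_eq_left⟩ := (h.periodic_norm_left y p).exists_mem_Ico₀ one_pos x
  obtain ⟨y', hy', norm_eq_right⟩ := (h.periodic_norm_right x' p).exists_mem_Ico₀ one_pos y
  exact ⟨(x', y'), ⟨Set.Ico_subset_Icc_self hx', Set.Ico_subset_Icc_self hy'⟩,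
    norm_eq_left.trans norm_eq_right⟩

lemma exists_abs_eval_mul_norm_le (h : InSc c Φ) (P : Polynomial ℤ) :
    ∃ C : ℝ, ∀ x y p, |((P.eval p : ℤ) : ℝ)| * ‖Φ x y p‖ ≤ C := by
  obtain ⟨C, hC⟩ := h.poly_bounded P 0 0 _ (isCompact_Icc.prod isCompact_Icc)
  refine ⟨C, fun x y p => ?_⟩
  obtain ⟨z, hz, norm_eq⟩ := h.exists_norm_eq_mem_unitSquare x y p
  rw [norm_eq]
  simpa only [iteratedDeriv_zero] using hC z.1 z.2 p hz

lemma exists_norm_le (h : InSc c Φ) : ∃ C : ℝ, ∀ x y p, ‖Φ x y p‖ ≤ C := by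
  simpa using h.exists_abs_eval_mul_norm_le 1

lemma norm1_ne_top (h : InSc c Φ) : norm1 Φ ≠ ⊤ := by
  obtain ⟨C, hC⟩ := h.exists_abs_eval_mul_norm_le (1 + Polynomial.X ^ 2)
  refine norm1_ne_top_iff.mpr
    ⟨_, summable_inv_one_add_intCast_sq.mul_left C, fun x y p => ?_⟩
  have weighted_le : (1 + (p : ℝ) ^ 2) * ‖Φ x y p‖ ≤ C := by
    simpa [abs_of_pos (show 0 < 1 + (p : ℝ) ^ 2 by positivity)] using hC x y p
  rwa [← div_eq_mul_inv, le_div_iff₀' (by positivity)]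

end InSc

section TripleProduct

variable (hbar μ ν : ℝ) (Φ Ψ Θ : ℝ → ℝ → ℤ → ℂ) (x y : ℝ) (p : ℤ)

/-- The common summand of the double series for `(Φ ⋆ Ψ) ⋆ Θ` and `Φ ⋆ (Ψ ⋆ Θ)` at `(x, y, p)`,
indexed so that `Φ`, `Ψ`, `Θ` have degrees `r`, `q - r`, `p - q`. -/
def tripleStarSummand (q r : ℤ) : ℂ :=
  Φ (x - hbar * (r - p) * μ) (y - hbar * (r - p) * ν) r *
  Ψ (x - hbar * (q + r - p) * μ) (y - hbar * (q + r - p) * ν) (q - r) *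
  Θ (x - hbar * q * μ) (y - hbar * q * ν) (p - q)

lemma starProd_starProd_left :
    starProd hbar μ ν (starProd hbar μ ν Φ Ψ) Θ x y p =
      ∑' q, ∑' r, tripleStarSummand hbar μ ν Φ Ψ Θ x y p q r := by
  refine tsum_congr fun q => ?_
  rw [starProd, ← tsum_mul_right]
  refine tsum_congr fun r => ?_
  rw [tripleStarSummand]
  push_cast
  congr 3 <;> ring

lemma starProd_starProd_right :
    starProd hbar μ ν Φ (starProd hbar μ ν Ψ Θ) x y p =
      ∑' r, ∑' q, tripleStarSummand hbar μ ν Φ Ψ Θ x y p q r := by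
  refine tsum_congr fun r => ?_
  -- The inner summation index is the degree `q - r` of `Ψ`.
  rw [starProd, ← tsum_mul_left, ← (Equiv.subRight r).tsum_eq]
  refine tsum_congr fun q => ?_
  rw [tripleStarSummand, Equiv.subRight_apply, mul_assoc (Φ _ _ _), sub_sub_sub_cancel_right]
  push_cast
  congr 3 <;> ring

variable {Φ Ψ Θ}

lemma summable_tripleStarSummand (hΦ : norm1 Φ ≠ ⊤) (hΨ : ∃ B : ℝ, ∀ x y p, ‖Ψ x y p‖ ≤ B)
    (hΘ : norm1 Θ ≠ ⊤) :
    Summable (Function.uncurry (tripleStarSummand hbar μ ν Φ Ψ Θ x y p)) := by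
  obtain ⟨u, hu, norm_Φ_le⟩ := norm1_ne_top_iff.mp hΦ
  obtain ⟨B, norm_Ψ_le⟩ := hΨ
  obtain ⟨w, hw, norm_Θ_le⟩ := norm1_ne_top_iff.mp hΘ
  have u_nonneg : 0 ≤ u := fun r => (norm_nonneg _).trans (norm_Φ_le 0 0 r)
  have B_nonneg : 0 ≤ B := (norm_nonneg _).trans (norm_Ψ_le 0 0 0)
  have w_nonneg : 0 ≤ w := fun s => (norm_nonneg _).trans (norm_Θ_le 0 0 s)
  have summable_w_sub : Summable fun q => w (p - q) := (Equiv.subLeft p).summable_iff.mpr hw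
  have summable_majorant : Summable fun qr : ℤ × ℤ => B * (w (p - qr.1) * u qr.2) :=
    (summable_w_sub.mul_of_nonneg hu (fun q => w_nonneg (p - q)) u_nonneg).mul_left B
  refine summable_majorant.of_norm_bounded ?_
  rintro ⟨q, r⟩
  calc ‖tripleStarSummand hbar μ ν Φ Ψ Θ x y p q r‖
      ≤ u r * B * w (p - q) := by
        rw [tripleStarSummand, norm_mul, norm_mul]
        gcongr
        exacts [mul_nonneg (u_nonneg r) B_nonneg, u_nonneg r, norm_Φ_le _ _ _, norm_Ψ_le _ _ _,
          norm_Θ_le _ _ _]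
    _ = B * (w (p - q) * u r) := by ring

theorem starProd_assoc_general (hΦ : norm1 Φ ≠ ⊤) (hΨ : ∃ B : ℝ, ∀ x y p, ‖Ψ x y p‖ ≤ B)
    (hΘ : norm1 Θ ≠ ⊤) :
    starProd hbar μ ν (starProd hbar μ ν Φ Ψ) Θ x y p =
      starProd hbar μ ν Φ (starProd hbar μ ν Ψ Θ) x y p := by
  rw [starProd_starProd_left, starProd_starProd_right]
  exact (summable_tripleStarSummand hbar μ ν x y p hΦ hΨ hΘ).tsum_comm.symm

end TripleProduct

theorem starProd_assoc (c : ℕ) (hc : 0 < c) (hbar μ ν : ℝ) (hμν : μ ^ 2 + ν ^ 2 ≠ 0)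
    (Φ Ψ Θ : ℝ → ℝ → ℤ → ℂ) (hΦ : InSc c Φ) (hΨ : InSc c Ψ) (hΘ : InSc c Θ) :
    ∀ (x y : ℝ) (p : ℤ),
      starProd hbar μ ν (starProd hbar μ ν Φ Ψ) Θ x y p =
      starProd hbar μ ν Φ (starProd hbar μ ν Ψ Θ) x y p :=
  fun x y p => starProd_assoc_general hbar μ ν x y p hΦ.norm1_ne_top hΨ.exists_norm_le
    hΘ.norm1_ne_top

end
end

section
/- The involution on S^c is an anti-homomorphism for the star product: for all Φ, Ψ ∈ S^c, (Φ ⋆ Ψ)* = Ψ* ⋆ Φ* as functions on ℝ × ℝ × ℤ. -/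
open MeasureTheory ENNReal

noncomputable section

/-!
Twisted periodicity makes `|Φ|` doubly periodic, so the decay in `p` required on the unit square
holds uniformly on the plane and the series for `Φ ⋆ Ψ` converges absolutely. Conjugating its `q`-th
term at `-p` gives the `(q + p)`-th term of `Ψ* ⋆ Φ*` at `p`, and translation by `p` permutes `ℤ`.
-/

namespace InSc

variable {c : ℕ} {Φ : ℝ → ℝ → ℤ → ℂ}

lemma norm_add_intCast (hΦ : InSc c Φ) (k : ℤ) (x y : ℝ) (p : ℤ) :
    ‖Φ (x + k) y p‖ = ‖Φ x y p‖ := by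
  have phase_imaginary : 2 * Real.pi * Complex.I * ((c : ℂ) * (k : ℂ) * (p : ℂ) * (y : ℂ)) =
      ((2 * Real.pi * (c * k * p * y) : ℝ) : ℂ) * Complex.I := by
    push_cast
    ring
  rw [hΦ.twisted, phase_imaginary, norm_mul, Complex.norm_exp_ofReal_mul_I, one_mul]

lemma norm_fract_fract (hΦ : InSc c Φ) (x y : ℝ) (p : ℤ) :
    ‖Φ (Int.fract x) (Int.fract y) p‖ = ‖Φ x y p‖ := by
  have periodic : Function.Periodic (fun t => Φ (Int.fract x) t p) 1 :=
    fun t => hΦ.periodic_y (Int.fract x) t p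
  calc ‖Φ (Int.fract x) (Int.fract y) p‖
      = ‖Φ (Int.fract x) y p‖ := by
        simpa only [mul_one, Int.self_sub_floor] using
          congrArg norm (periodic.sub_int_mul_eq (x := y) ⌊y⌋)
    _ = ‖Φ (Int.fract x + ⌊x⌋) y p‖ := (hΦ.norm_add_intCast ⌊x⌋ _ y p).symm
    _ = ‖Φ x y p‖ := by rw [Int.fract_add_floor]

lemma exists_forall_eval_mul_norm_le (hΦ : InSc c Φ) (P : Polynomial ℤ) :
    ∃ C : ℝ, ∀ (x y : ℝ) (p : ℤ), |((P.eval p : ℤ) : ℝ)| * ‖Φ x y p‖ ≤ C := by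
  obtain ⟨C, hC⟩ := hΦ.poly_bounded P 0 0 (Set.Icc 0 1 ×ˢ Set.Icc 0 1)
    (isCompact_Icc.prod isCompact_Icc)
  refine ⟨C, fun x y p => ?_⟩
  have fract_mem (t : ℝ) : Int.fract t ∈ Set.Icc (0 : ℝ) 1 :=
    ⟨Int.fract_nonneg t, (Int.fract_lt_one t).le⟩
  simpa only [iteratedDeriv_zero, hΦ.norm_fract_fract] using
    hC (Int.fract x) (Int.fract y) p ⟨fract_mem x, fract_mem y⟩

lemma exists_forall_norm_le (hΦ : InSc c Φ) :
    ∃ C : ℝ, ∀ (x y : ℝ) (p : ℤ), ‖Φ x y p‖ ≤ C := by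
  simpa only [Polynomial.eval_one, Int.cast_one, abs_one, one_mul] using
    hΦ.exists_forall_eval_mul_norm_le 1

lemma summable_apply (hΦ : InSc c Φ) (x y : ℤ → ℝ) : Summable fun q => Φ (x q) (y q) q := by
  obtain ⟨C, hC⟩ := hΦ.exists_forall_eval_mul_norm_le (Polynomial.X ^ 2)
  have summable_bound : Summable fun q : ℤ => C * (1 / (q : ℝ) ^ 2) :=
    (Real.summable_one_div_int_pow.mpr one_lt_two).mul_left C
  refine summable_bound.of_norm_bounded_eventually ?_
  filter_upwards [(Set.finite_singleton (0 : ℤ)).compl_mem_cofinite] with q (hq : q ≠ 0)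
  have sq_pos : 0 < (q : ℝ) ^ 2 := by positivity
  have decay : (q : ℝ) ^ 2 * ‖Φ (x q) (y q) q‖ ≤ C := by
    simpa only [Polynomial.eval_pow, Polynomial.eval_X, Int.cast_pow, abs_of_pos sq_pos]
      using hC (x q) (y q) q
  rwa [mul_one_div, le_div_iff₀' sq_pos]

end InSc

/-- The `q`-th term of the series defining `(Φ ⋆ Ψ)(x, y, p)`. -/
def starProdTerm (hbar μ ν : ℝ) (Φ Ψ : ℝ → ℝ → ℤ → ℂ) (x y : ℝ) (p q : ℤ) : ℂ :=
  Φ (x - hbar * ((q - p : ℤ) : ℝ) * μ) (y - hbar * ((q - p : ℤ) : ℝ) * ν) q *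
  Ψ (x - hbar * (q : ℝ) * μ) (y - hbar * (q : ℝ) * ν) (p - q)

lemma InSc.summable_starProdTerm {c d : ℕ} {Φ Ψ : ℝ → ℝ → ℤ → ℂ} (hΦ : InSc c Φ)
    (hΨ : InSc d Ψ) (hbar μ ν x y : ℝ) (p : ℤ) :
    Summable (starProdTerm hbar μ ν Φ Ψ x y p) := by
  obtain ⟨C, hC⟩ := hΨ.exists_forall_norm_le
  have summable_left := hΦ.summable_apply (fun q => x - hbar * ((q - p : ℤ) : ℝ) * μ)
    (fun q => y - hbar * ((q - p : ℤ) : ℝ) * ν)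
  refine (summable_left.norm.mul_right C).of_norm_bounded fun q => ?_
  exact norm_mul_le_of_le le_rfl (hC _ _ _)

lemma starProdTerm_invol_add (hbar μ ν : ℝ) (Φ Ψ : ℝ → ℝ → ℤ → ℂ) (x y : ℝ) (p q : ℤ) :
    starProdTerm hbar μ ν (invol Ψ) (invol Φ) x y p (q + p) =
      (starRingEnd ℂ) (starProdTerm hbar μ ν Φ Ψ x y (-p) q) := by
  have neg_sub_index : -(p - (q + p)) = q := by ring
  have neg_add_index : -(q + p) = -p - q := by ring
  simp only [starProdTerm, invol, map_mul, add_sub_cancel_right, sub_neg_eq_add, neg_sub_index,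
    neg_add_index]
  exact mul_comm _ _

theorem invol_starProd_general {hbar μ ν : ℝ} {Φ Ψ : ℝ → ℝ → ℤ → ℂ} {x y : ℝ} {p : ℤ}
    (h : Summable (starProdTerm hbar μ ν Φ Ψ x y (-p))) :
    HasSum (starProdTerm hbar μ ν (invol Ψ) (invol Φ) x y p)
      (invol (starProd hbar μ ν Φ Ψ) x y p) := by
  have hasSum_starProd : HasSum (starProdTerm hbar μ ν Φ Ψ x y (-p))
      (starProd hbar μ ν Φ Ψ x y (-p)) := h.hasSum
  have reindex : starProdTerm hbar μ ν (invol Ψ) (invol Φ) x y p ∘ Equiv.addRight p =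
      fun q => (starRingEnd ℂ) (starProdTerm hbar μ ν Φ Ψ x y (-p) q) :=
    funext (starProdTerm_invol_add hbar μ ν Φ Ψ x y p)
  rw [← (Equiv.addRight p).hasSum_iff, reindex]
  exact Complex.hasSum_conj'.mpr hasSum_starProd

theorem invol_starProd (c : ℕ) (hc : 0 < c) (hbar μ ν : ℝ) (hμν : μ ^ 2 + ν ^ 2 ≠ 0)
    (Φ Ψ : ℝ → ℝ → ℤ → ℂ) (hΦ : InSc c Φ) (hΨ : InSc c Ψ) :
    ∀ (x y : ℝ) (p : ℤ),
      invol (starProd hbar μ ν Φ Ψ) x y p =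
      starProd hbar μ ν (invol Ψ) (invol Φ) x y p := by
  intro x y p
  exact (invol_starProd_general (hΦ.summable_starProdTerm hΨ hbar μ ν x y (-p))).tsum_eq.symm

end
end

section
/- If Φ ∈ S^c satisfies δ₁Φ = 0, δ₂Φ = 0, and δ₃Φ = 0 (where (δ₁Φ)(x,y,p) = −(∂Φ/∂x)(x,y,p), (δ₂Φ)(x,y,p) = 2πicpx·Φ(x,y,p) − (∂Φ/∂y)(x,y,p), and (δ₃Φ)(x,y,p) = 2πip·Φ(x,y,p)), then there exists λ ∈ ℂ such that Φ(x, y, p) = λ when p = 0 and Φ(x, y, p) = 0 when p ≠ 0; i.e. Φ is a scalar multiple of the identity element of S^c. -/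
/-!
The equation `δ₃Φ = 0` reads `2πip·Φ(x, y, p) = 0`, which kills every mode `p ≠ 0`. On the mode
`p = 0` the term `2πicpx·Φ` of `δ₂` disappears, so `δ₁Φ = δ₂Φ = 0` says that both partial
derivatives of `Φ(·, ·, 0)` vanish, and this function is constant.
-/

open MeasureTheory ENNReal

noncomputable section

theorem eq_of_partial_deriv_eq_zero {𝕜 E : Type*} [RCLike 𝕜] [NormedAddCommGroup E]
    [NormedSpace 𝕜 E] {f : 𝕜 → 𝕜 → E}
    (hfx : ∀ y, Differentiable 𝕜 fun x => f x y) (hfy : ∀ x, Differentiable 𝕜 (f x))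
    (hdx : ∀ x y, deriv (fun x' => f x' y) x = 0) (hdy : ∀ x y, deriv (f x) y = 0)
    (x₁ y₁ x₂ y₂ : 𝕜) : f x₁ y₁ = f x₂ y₂ :=
  calc
    f x₁ y₁ = f x₂ y₁ := is_const_of_deriv_eq_zero (hfx y₁) (hdx · y₁) x₁ x₂
    _ = f x₂ y₂ := is_const_of_deriv_eq_zero (hfy x₂) (hdy x₂) y₁ y₂

namespace InSc

variable {c : ℕ} {Φ : ℝ → ℝ → ℤ → ℂ}

theorem differentiable (hΦ : InSc c Φ) (p : ℤ) :
    Differentiable ℝ fun xy : ℝ × ℝ => Φ xy.1 xy.2 p :=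
  (hΦ.smooth p).differentiable (by simp)

theorem differentiable_fst (hΦ : InSc c Φ) (y : ℝ) (p : ℤ) :
    Differentiable ℝ fun x => Φ x y p :=
  (hΦ.differentiable p).comp (differentiable_id.prodMk (differentiable_const y))

theorem differentiable_snd (hΦ : InSc c Φ) (x : ℝ) (p : ℤ) :
    Differentiable ℝ fun y => Φ x y p :=
  (hΦ.differentiable p).comp ((differentiable_const x).prodMk differentiable_id)

end InSc

theorem d1_eq_zero_iff {Φ : ℝ → ℝ → ℤ → ℂ} {x y : ℝ} {p : ℤ} :
    d1 Φ x y p = 0 ↔ deriv (fun x' => Φ x' y p) x = 0 :=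
  neg_eq_zero

theorem d2_apply_zero (c : ℕ) (Φ : ℝ → ℝ → ℤ → ℂ) (x y : ℝ) :
    d2 c Φ x y 0 = -deriv (fun y' => Φ x y' 0) y := by
  simp [d2]

theorem d3_eq_zero_iff {Φ : ℝ → ℝ → ℤ → ℂ} {x y : ℝ} {p : ℤ} :
    d3 Φ x y p = 0 ↔ p = 0 ∨ Φ x y p = 0 := by
  simp [d3, Real.pi_ne_zero]

theorem scalar_of_derivations_vanish_general (c : ℕ) (Φ : ℝ → ℝ → ℤ → ℂ)
    (hΦx : ∀ y, Differentiable ℝ fun x => Φ x y 0) (hΦy : ∀ x, Differentiable ℝ fun y => Φ x y 0)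
    (h1 : ∀ x y, d1 Φ x y 0 = 0) (h2 : ∀ x y, d2 c Φ x y 0 = 0)
    (h3 : ∀ x y p, d3 Φ x y p = 0) :
    ∃ lam : ℂ, ∀ (x y : ℝ) (p : ℤ), Φ x y p = if p = 0 then lam else 0 := by
  have hdx (x y : ℝ) : deriv (fun x' => Φ x' y 0) x = 0 := d1_eq_zero_iff.mp (h1 x y)
  have hdy (x y : ℝ) : deriv (fun y' => Φ x y' 0) y = 0 :=
    neg_eq_zero.mp ((d2_apply_zero c Φ x y).symm.trans (h2 x y))
  refine ⟨Φ 0 0 0, fun x y p => ?_⟩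
  split_ifs with hp
  · rw [hp]
    exact eq_of_partial_deriv_eq_zero hΦx hΦy hdx hdy x y 0 0
  · exact (d3_eq_zero_iff.mp (h3 x y p)).resolve_left hp

theorem scalar_of_derivations_vanish (c : ℕ) (hc : 0 < c) (hbar μ ν : ℝ) (hμν : μ ^ 2 + ν ^ 2 ≠ 0)
    (Φ : ℝ → ℝ → ℤ → ℂ) (hΦ : InSc c Φ)
    (h1 : ∀ (x y : ℝ) (p : ℤ), d1 Φ x y p = 0)
    (h2 : ∀ (x y : ℝ) (p : ℤ), d2 c Φ x y p = 0)
    (h3 : ∀ (x y : ℝ) (p : ℤ), d3 Φ x y p = 0) :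
    ∃ lam : ℂ, ∀ (x y : ℝ) (p : ℤ), Φ x y p = if p = 0 then lam else 0 :=
  scalar_of_derivations_vanish_general c Φ (hΦ.differentiable_fst · 0) (hΦ.differentiable_snd · 0)
    (h1 · · 0) (h2 · · 0) h3

end
end
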